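/- For all a ∈ Q, the element Φ intertwines the two iterated coproducts: (Δ⊗id)(Δ(a)) · Φ = Φ · (id⊗Δ)(Δ(a)) in Q⊗Q⊗Q. -/

import Mathlib

open TensorProduct

set_option maxHeartbeats 1000000
set_option synthInstance.maxHeartbeats 400000

noncomputable section

/-- Generators of the restricted quantum group `Q = \bar U_i sl(2)`. -/
inductive QGen : Type
  | E | F | K | Kinv
deriving DecidableEq

/-- The free algebra on the generators. -/
abbrev FA : Type := FreeAlgebra ℂ QGen

def ιE : FA := FreeAlgebra.ι ℂ QGen.E
def ιF : FA := FreeAlgebra.ι ℂ QGen.F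
def ιK : FA := FreeAlgebra.ι ℂ QGen.K
def ιKi : FA := FreeAlgebra.ι ℂ QGen.Kinv

/-- Defining relations of `\bar U_i sl(2)` (at `q = i`, i.e. `p = 2`). -/
inductive QRel : FA → FA → Prop
  | KKi : QRel (ιK * ιKi) 1
  | KiK : QRel (ιKi * ιK) 1
  | KEKi : QRel (ιK * ιE * ιKi) (-ιE)
  | KFKi : QRel (ιK * ιF * ιKi) (-ιF)
  | EF : QRel (ιE * ιF - ιF * ιE) ((2 * Complex.I)⁻¹ • (ιK - ιKi))
  | Esq : QRel (ιE ^ 2) 0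
  | Fsq : QRel (ιF ^ 2) 0
  | K4 : QRel (ιK ^ 4) 1

/-- The restricted quantum group `\bar U_i sl(2)`: the quotient of the free algebra
by the two-sided ideal generated by the defining relations. -/
abbrev Q : Type := RingQuot QRel

def gE : Q := RingQuot.mkAlgHom ℂ QRel ιE
def gF : Q := RingQuot.mkAlgHom ℂ QRel ιF
def gK : Q := RingQuot.mkAlgHom ℂ QRel ιK
def gKi : Q := RingQuot.mkAlgHom ℂ QRel ιKi

section Gadgets

variable (k : Type) [Field k] (A : Type) [Ring A] [Algebra k A]

abbrev TP2 : Type := A ⊗[k] A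
abbrev TP3 : Type := A ⊗[k] (A ⊗[k] A)
abbrev TP4 : Type := A ⊗[k] (A ⊗[k] (A ⊗[k] A))

/-- Multiplication `a ⊗ b ↦ a * b`. -/
def mulA : TP2 k A →ₗ[k] A := LinearMap.mul' k A

/-- Tensor flip `a ⊗ b ↦ b ⊗ a`. -/
def flipA : TP2 k A →ₗ[k] TP2 k A := (TensorProduct.comm k A A).toLinearMap

/-- `a ↦ a ⊗ 1`. -/
def lTen : A →ₗ[k] TP2 k A := (TensorProduct.mk k A A).flip 1

/-- `a ↦ 1 ⊗ a`. -/
def rTen : A →ₗ[k] TP2 k A := TensorProduct.mk k A A 1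

/-- `a ⊗ b ↦ a ⊗ b ⊗ 1`. -/
def emb12 : TP2 k A →ₗ[k] TP3 k A := TensorProduct.map LinearMap.id (lTen k A)

/-- `a ⊗ b ↦ a ⊗ 1 ⊗ b`. -/
def emb13 : TP2 k A →ₗ[k] TP3 k A := TensorProduct.map LinearMap.id (rTen k A)

/-- `a ⊗ b ↦ 1 ⊗ a ⊗ b`. -/
def emb23 : TP2 k A →ₗ[k] TP3 k A := TensorProduct.mk k A (TP2 k A) 1

/-- `a ⊗ b ⊗ c ↦ a ⊗ c ⊗ b`. -/
def perm132 : TP3 k A →ₗ[k] TP3 k A := TensorProduct.map LinearMap.id (flipA k A)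

/-- `a ⊗ b ⊗ c ↦ b ⊗ c ⊗ a`. -/
def perm231 : TP3 k A →ₗ[k] TP3 k A :=
  (TensorProduct.assoc k A A A).toLinearMap ∘ₗ (TensorProduct.comm k A (TP2 k A)).toLinearMap

/-- `a ⊗ b ⊗ c ↦ c ⊗ a ⊗ b`. -/
def perm312 : TP3 k A →ₗ[k] TP3 k A :=
  (TensorProduct.comm k (TP2 k A) A).toLinearMap ∘ₗ (TensorProduct.assoc k A A A).symm.toLinearMap

/-- `a ⊗ b ⊗ c ↦ b ⊗ a ⊗ c`. -/
def perm213 : TP3 k A →ₗ[k] TP3 k A :=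
  (TensorProduct.assoc k A A A).toLinearMap ∘ₗ
    (TensorProduct.map (flipA k A) LinearMap.id) ∘ₗ (TensorProduct.assoc k A A A).symm.toLinearMap

variable {k A}

/-- `(Δ ⊗ id)` on two tensor factors, landing in the triple tensor product. -/
def copL (D : A →ₐ[k] TP2 k A) : TP2 k A →ₗ[k] TP3 k A :=
  (TensorProduct.assoc k A A A).toLinearMap ∘ₗ TensorProduct.map D.toLinearMap LinearMap.id

/-- `(id ⊗ Δ)` on two tensor factors. -/
def copR (D : A →ₐ[k] TP2 k A) : TP2 k A →ₗ[k] TP3 k A :=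
  TensorProduct.map LinearMap.id D.toLinearMap

/-- `(ε ⊗ id) : A ⊗ A → A`. -/
def cuL (ce : A →ₐ[k] k) : TP2 k A →ₗ[k] A :=
  (TensorProduct.lid k A).toLinearMap ∘ₗ TensorProduct.map ce.toLinearMap LinearMap.id

/-- `(id ⊗ ε) : A ⊗ A → A`. -/
def cuR (ce : A →ₐ[k] k) : TP2 k A →ₗ[k] A :=
  (TensorProduct.rid k A).toLinearMap ∘ₗ TensorProduct.map LinearMap.id ce.toLinearMap

/-- `(id ⊗ ε ⊗ id) : A ⊗ A ⊗ A → A ⊗ A`. -/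
def cuMid (ce : A →ₐ[k] k) : TP3 k A →ₗ[k] TP2 k A :=
  TensorProduct.map LinearMap.id (cuL ce)

/-- `(Δ ⊗ id ⊗ id)`. -/
def cop4_1 (D : A →ₐ[k] TP2 k A) : TP3 k A →ₗ[k] TP4 k A :=
  (TensorProduct.assoc k A A (TP2 k A)).toLinearMap ∘ₗ TensorProduct.map D.toLinearMap LinearMap.id

/-- `(id ⊗ Δ ⊗ id)`. -/
def cop4_2 (D : A →ₐ[k] TP2 k A) : TP3 k A →ₗ[k] TP4 k A :=
  TensorProduct.map LinearMap.id (copL D)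

/-- `(id ⊗ id ⊗ Δ)`. -/
def cop4_3 (D : A →ₐ[k] TP2 k A) : TP3 k A →ₗ[k] TP4 k A :=
  TensorProduct.map LinearMap.id (copR D)

/-- `a ⊗ b ⊗ c ↦ a ⊗ b ⊗ c ⊗ 1`, i.e. `Φ ↦ Φ ⊗ 1`. -/
def pad4 : TP3 k A →ₗ[k] TP4 k A :=
  TensorProduct.map LinearMap.id (TensorProduct.map LinearMap.id (lTen k A))

/-- `a ⊗ b ⊗ c ↦ f(a) * g(b) * h(c)`. -/
def tmap3 (f g h : A →ₗ[k] A) : TP3 k A →ₗ[k] A :=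
  mulA k A ∘ₗ TensorProduct.map f (mulA k A ∘ₗ TensorProduct.map g h)

/-- `a ⊗ b ↦ S(a) * b`, used in the antipode axiom `m ∘ (S ⊗ id) ∘ Δ = 1·ε`. -/
def antipL (s : A →ₗ[k] A) : TP2 k A →ₗ[k] A := mulA k A ∘ₗ TensorProduct.map s LinearMap.id

/-- `a ⊗ b ↦ a * S(b)`. -/
def antipR (s : A →ₗ[k] A) : TP2 k A →ₗ[k] A := mulA k A ∘ₗ TensorProduct.map LinearMap.id s

end Gadgets

/-- Central idempotent `e₀ = (1 + K²)/2`. -/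
def e0 : Q := (2:ℂ)⁻¹ • (1 + gK ^ 2)

/-- Central idempotent `e₁ = (1 − K²)/2`. -/
def e1 : Q := (2:ℂ)⁻¹ • (1 - gK ^ 2)

/-- `f⁺ = −i F`. -/
def fp : Q := (-Complex.I) • gF

/-- `f⁻ = E K⁻¹`. -/
def fm : Q := gE * gKi

/-- The Casimir element `C = FE − (i/4)(K − K⁻¹)`. -/
def Cas : Q := gF * gE - (Complex.I / 4) • (gK - gKi)

def t2 (a b : Q) : TP2 ℂ Q := a ⊗ₜ[ℂ] b

def t3 (a b c : Q) : TP3 ℂ Q := a ⊗ₜ[ℂ] (b ⊗ₜ[ℂ] c)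

def eEF : Q := gE * gF
def eEK : Q := gE * gK
def eFK : Q := gF * gK
def eEFK : Q := gE * gF * gK

/-- `Φ^{010}` component of the coassociator. -/
def Phi010 : TP3 ℂ Q :=
  t3 1 1 1 - (1 + Complex.I) • t3 gE gK gF + (1 - Complex.I) • t3 eFK gK eEK
    + (2:ℂ) • t3 eEFK 1 eEFK

/-- `Φ^{101}` component of the coassociator. -/
def Phi101 : TP3 ℂ Q :=
  (Complex.I - 1) • t3 1 gF eEK + t3 1 gK 1 + (2:ℂ) • t3 1 eEF eEFK
    - (1 + Complex.I) • t3 1 eEK gF - (1 + Complex.I) • t3 gE eFK 1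
    + (2 * Complex.I) • t3 gE eEFK gF + (1 - Complex.I) • t3 eFK gE 1
    - (2 * Complex.I) • t3 eFK eEFK eEK - (2:ℂ) • t3 eEFK eEF 1

/-- `Φ^{111}` component of the coassociator. -/
def Phi111 (β : ℂ) : TP3 ℂ Q :=
  (Complex.I * β ^ 2) • (
    (1 + Complex.I) • t3 1 gF eEK - t3 1 gK 1 - (2:ℂ) • t3 1 eEF 1
      - (2 * Complex.I) • t3 1 eEF eEFK + (1 + Complex.I) • t3 1 eEK gF
      - (1 + Complex.I) • t3 gE 1 gF + (1 + Complex.I) • t3 gE eFK 1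
      + (2 * Complex.I) • t3 gE eFK eEFK + (2:ℂ) • t3 gE eEFK gF
      - (1 + Complex.I) • t3 eFK 1 eEK + (1 + Complex.I) • t3 eFK gE 1
      + (2 * Complex.I) • t3 eFK gE eEFK + (2:ℂ) • t3 eFK eEFK eEK
      + (2 * Complex.I) • t3 eEFK gF eEK + (2 * Complex.I) • t3 eEFK gK eEFK
      - (2 * Complex.I) • t3 eEFK eEF 1 + (2 * Complex.I) • t3 eEFK eEK gF
      + (4:ℂ) • t3 eEFK eEF eEFK)

/-- The coassociator `Φ` of the quasi-Hopf algebra structure on `Q`. -/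
def Phi (β : ℂ) : TP3 ℂ Q :=
  t3 e0 e0 e0 + t3 e1 e0 e0 + Phi010 * t3 e0 e1 e0 + t3 e0 e0 e1
    + t3 e1 e1 e0 + Phi101 * t3 e1 e0 e1 + t3 e0 e1 e1 + Phi111 β * t3 e1 e1 e1

def R00 : TP2 ℂ Q :=
  (2:ℂ)⁻¹ • ((t2 1 1 + t2 1 gK + t2 gK 1 - t2 gK gK) * (t2 1 1 + (2 * Complex.I) • t2 gE gF))

def R01 : TP2 ℂ Q :=
  (2:ℂ)⁻¹ • ((t2 1 1 - Complex.I • t2 1 gK + t2 gK 1 + Complex.I • t2 gK gK) *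
    (t2 1 1 + (1 - Complex.I) • t2 eFK eEK - (1 - Complex.I) • t2 gE gF
      + (1 + Complex.I) • t2 eEFK 1 + (2 * Complex.I) • t2 eEFK eEFK))

def R10 : TP2 ℂ Q :=
  (2:ℂ)⁻¹ • ((t2 1 1 + t2 1 gK - Complex.I • t2 gK 1 + Complex.I • t2 gK gK) *
    (t2 1 gK + (1 - Complex.I) • t2 eFK gE + (1 - Complex.I) • t2 gE eFK
      - (1 - Complex.I) • t2 1 eEF - (2 * Complex.I) • t2 eEFK eEF))

def R11 (β : ℂ) : TP2 ℂ Q :=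
  (β / 2) • ((t2 1 1 - Complex.I • t2 1 gK - Complex.I • t2 gK 1 + t2 gK gK) *
    ((-Complex.I) • t2 gK 1 + (2 * Complex.I) • t2 eEK gF + (1 - Complex.I) • t2 gK eEFK
      - (1 + Complex.I) • t2 eEF 1 - (2 * Complex.I) • t2 eEF eEFK))

/-- The universal R-matrix `R` of the quasi-triangular quasi-Hopf structure on `Q`. -/
def Rmat (β : ℂ) : TP2 ℂ Q :=
  R00 * t2 e0 e0 + R01 * t2 e0 e1 + R10 * t2 e1 e0 + R11 β * t2 e1 e1

/-- The standard R-matrix `R_st` of the quotient `Q/(K²-1)`. -/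
def Rst : TP2 ℂ Q :=
  (2:ℂ)⁻¹ • ∑ m ∈ Finset.range 2, ∑ n ∈ Finset.range 2,
    ((-1:ℂ) ^ (m * n)) • (t2 (gK ^ m) (gK ^ n) * (t2 1 1 + (2 * Complex.I) • t2 gE gF))

/-- The monodromy matrix `M = R₂₁ · R`. -/
def Mmat (β : ℂ) : TP2 ℂ Q := flipA ℂ Q (Rmat β) * Rmat β

/-- The ribbon element `v = (e₀ − iβ K e₁)(1 − 2 f⁺ f⁻)`. -/
def vRib (β : ℂ) : Q := (e0 - (Complex.I * β) • (gK * e1)) * (1 - (2:ℂ) • (fp * fm))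

/-- The coevaluation element `β = e₀ − 2iβ² C e₁`. -/
def bbEl (β : ℂ) : Q := e0 - (2 * Complex.I * β ^ 2) • (Cas * e1)

/-- `b ⊗ c ↦ S(b · bb · S(c))`, inner part of the Drinfeld element. -/
def uInner (S : Q →ₗ[ℂ] Q) (bb : Q) : TP2 ℂ Q →ₗ[ℂ] Q :=
  S ∘ₗ mulA ℂ Q ∘ₗ TensorProduct.map (LinearMap.mulRight ℂ bb) S

/-- `Φ' ⊗ Φ'' ⊗ Φ''' ↦ S(Φ'' · bb · S(Φ''')) ⊗ Φ'`. -/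
def uMap1 (S : Q →ₗ[ℂ] Q) (bb : Q) : TP3 ℂ Q →ₗ[ℂ] TP2 ℂ Q :=
  TensorProduct.map (uInner S bb) LinearMap.id ∘ₗ (TensorProduct.comm ℂ Q (TP2 ℂ Q)).toLinearMap

/-- `R' ⊗ R'' ↦ S(R'') · al · R'`. -/
def uMap2 (S : Q →ₗ[ℂ] Q) (al : Q) : TP2 ℂ Q →ₗ[ℂ] Q :=
  mulA ℂ Q ∘ₗ TensorProduct.map (LinearMap.mulRight ℂ al ∘ₗ S) LinearMap.id ∘ₗ
    (TensorProduct.comm ℂ Q Q).toLinearMap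

/-- `(x ⊗ a) ⊗ (R' ⊗ R'') ↦ x · (S(R'') · al · R') · a`. -/
def uBig (S : Q →ₗ[ℂ] Q) (al : Q) : TP2 ℂ Q ⊗[ℂ] TP2 ℂ Q →ₗ[ℂ] Q :=
  mulA ℂ Q ∘ₗ TensorProduct.map LinearMap.id (mulA ℂ Q ∘ₗ (TensorProduct.comm ℂ Q Q).toLinearMap)
    ∘ₗ (TensorProduct.assoc ℂ Q Q Q).toLinearMap ∘ₗ TensorProduct.map LinearMap.id (uMap2 S al)

/-- The Drinfeld element `u = Σ S(Φ''·b·S(Φ'''))·S(R'')·α·R'·Φ'` (with `α = 1`). -/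
def uDrin (β : ℂ) (S : Q →ₗ[ℂ] Q) : Q :=
  uBig S 1 (uMap1 S (bbEl β) (Phi β) ⊗ₜ[ℂ] Rmat β)

/-- The balancing element `g = b · S(α) · v⁻¹ · u` (with `α = 1`). -/
def balG (β : ℂ) (S : Q →ₗ[ℂ] Q) : Q :=
  bbEl β * S 1 * Ring.inverse (vRib β) * uDrin β S

/-- The cointegral `c = (β²/i)·E·F·(1 + K + K² + K³)`. -/
def cInt (β : ℂ) : Q := (β ^ 2 / Complex.I) • (gE * gF * (1 + gK + gK ^ 2 + gK ^ 3))

/-- The q-trace of a one-dimensional representation, with balancing element `K⁻¹`. -/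
def qTr1 (ρ : Q →ₐ[ℂ] ℂ) : Q →ₗ[ℂ] ℂ := ρ.toLinearMap ∘ₗ LinearMap.mulLeft ℂ gK

/-- The q-trace of a two-dimensional (matrix) representation, with balancing element `K⁻¹`. -/
def qTrM (ρ : Q →ₐ[ℂ] Matrix (Fin 2) (Fin 2) ℂ) : Q →ₗ[ℂ] ℂ :=
  Matrix.traceLinearMap (Fin 2) ℂ ℂ ∘ₗ ρ.toLinearMap ∘ₗ LinearMap.mulLeft ℂ gK

/-- The Drinfeld mapping `φ ↦ (φ ⊗ id)(M)`. -/
def drinfeldImg (β : ℂ) (φ : Q →ₗ[ℂ] ℂ) : Q :=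
  (TensorProduct.lid ℂ Q) (TensorProduct.map φ LinearMap.id (Mmat β))

/-!
As `Δ` is coassociative, `Φ` intertwines the two iterated coproducts if and only if it commutes with
the image of `(id ⊗ Δ) ∘ Δ`. Since `K²` is central with square `1`, this may be checked on the
ideals of `e₀` and `e₁`, where `K² = 1` and `K² = -1` respectively, so that `K⁻¹ = ±K`, one
component `Φ^{abc}` at a time. Each component factors into elements whose commutation with `E`, `F`,
`K` is transparent. If `K² = -1`, the element `1 + i(1 - c)EFK` implements the rescaling `E ↦ cE`,
`F ↦ c⁻¹F`; conjugation by `K` is the rescaling by `-1`; and the Casimir element is central. In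
`Φ^{111}` rescaling each tensor factor by `i` is undone by rescaling the whole tensor product by
`-i`. In `Φ^{101}` the last two factors are first rescaled by `i`; applying `-i`, `-1`, `-i` to the
three factors then leaves `-i`, `-i`, `1`, which a rescaling of the first two factors by `i` undoes.
In `Φ^{010}` the elements `E ⊗ K ⊗ F` and `FK ⊗ K ⊗ EK` already commute with the coproduct.
-/

section TensorSigns

variable {R M N : Type*} [CommRing R] [AddCommGroup M] [Module R M] [AddCommGroup N] [Module R N]

theorem tmul_neg_eq_smul (m : M) (n : N) : m ⊗ₜ[R] (-n) = (-1 : R) • m ⊗ₜ[R] n := by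
  rw [← neg_one_smul R n, tmul_smul]

theorem neg_tmul_eq_smul (m : M) (n : N) : (-m) ⊗ₜ[R] n = (-1 : R) • m ⊗ₜ[R] n := by
  rw [← neg_one_smul R m, smul_tmul']

end TensorSigns

/-- The image of the generators `E, F, K` of `Q` in an algebra where `K²` acts by the scalar `sign`
(`1` on the ideal of `e₀`, `-1` on that of `e₁`), so that `K⁻¹ = sign • K` there. -/
@[ext]
structure SectorTriple (A : Type*) [Ring A] [Algebra ℂ A] where
  sign : ℂ
  E : A
  F : A
  K : A
  K_mul_K : K * K = sign • 1
  K_mul_E : K * E = -(E * K)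
  K_mul_F : K * F = -(F * K)
  E_mul_E : E * E = 0
  F_mul_F : F * F = 0
  F_mul_E : F * E = E * F + ((1 - sign) * (Complex.I / 2)) • K

namespace SectorTriple

variable {A B C : Type*} [Ring A] [Algebra ℂ A] [Ring B] [Algebra ℂ B] [Ring C] [Algebra ℂ C]

section Words

variable (x : SectorTriple A) (b : A)

theorem K_mul_K_mul : x.K * (x.K * b) = x.sign • b := by
  rw [← mul_assoc, K_mul_K, smul_one_mul]

theorem K_mul_E_mul : x.K * (x.E * b) = -(x.E * (x.K * b)) := by
  rw [← mul_assoc, K_mul_E, neg_mul, mul_assoc]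

theorem K_mul_F_mul : x.K * (x.F * b) = -(x.F * (x.K * b)) := by
  rw [← mul_assoc, K_mul_F, neg_mul, mul_assoc]

theorem E_mul_E_mul : x.E * (x.E * b) = 0 := by
  rw [← mul_assoc, E_mul_E, zero_mul]

theorem F_mul_F_mul : x.F * (x.F * b) = 0 := by
  rw [← mul_assoc, F_mul_F, zero_mul]

theorem F_mul_E_mul :
    x.F * (x.E * b) = x.E * (x.F * b) + ((1 - x.sign) * (Complex.I / 2)) • (x.K * b) := by
  rw [← mul_assoc, F_mul_E, add_mul, smul_mul_assoc, mul_assoc]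

end Words

attribute [simp] K_mul_K K_mul_E K_mul_F E_mul_E F_mul_F F_mul_E
  K_mul_K_mul K_mul_E_mul K_mul_F_mul E_mul_E_mul F_mul_F_mul F_mul_E_mul

/-- Rescaling by a nonzero `c`: the pullback along the automorphism `E ↦ cE`, `F ↦ c⁻¹F`. -/
@[simps]
def scale (x : SectorTriple A) {c : ℂ} (hc : c ≠ 0) : SectorTriple A where
  sign := x.sign
  E := c • x.E
  F := c⁻¹ • x.F
  K := x.K
  K_mul_K := x.K_mul_K
  K_mul_E := by simp
  K_mul_F := by simp
  E_mul_E := by simp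
  F_mul_F := by simp
  F_mul_E := by simp [smul_smul, hc]

/-- The action on a tensor product through the coproduct. -/
@[simps]
def tensor (x : SectorTriple A) (y : SectorTriple B) : SectorTriple (A ⊗[ℂ] B) where
  sign := x.sign * y.sign
  E := 1 ⊗ₜ y.E + x.E ⊗ₜ y.K
  F := (x.sign • x.K) ⊗ₜ y.F + x.F ⊗ₜ 1
  K := x.K ⊗ₜ y.K
  K_mul_K := by
    simp [Algebra.TensorProduct.one_def, ← smul_tmul', smul_smul, mul_comm]
  K_mul_E := by
    simp [mul_add, add_mul, tmul_neg, neg_tmul, add_comm]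
  K_mul_F := by
    simp [mul_add, add_mul, tmul_neg, neg_tmul, ← smul_tmul', add_comm]
  E_mul_E := by
    simp [mul_add, add_mul, tmul_neg]
  F_mul_F := by
    simp [mul_add, add_mul, neg_tmul, ← smul_tmul']
  F_mul_E := by
    simp only [← smul_tmul', mul_add, add_mul, smul_mul_assoc, mul_smul_comm,
      Algebra.TensorProduct.tmul_mul_tmul, one_mul, mul_one, F_mul_E, K_mul_E, K_mul_F, tmul_add,
      add_tmul, tmul_smul, tmul_neg, neg_tmul, smul_add, smul_neg]
    module

/-- The image under an algebra homomorphism, used to reassociate triple tensor products. -/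
@[simps]
def map (x : SectorTriple A) (f : A →ₐ[ℂ] B) : SectorTriple B where
  sign := x.sign
  E := f x.E
  F := f x.F
  K := f x.K
  K_mul_K := by simp [← map_mul]
  K_mul_E := by simp [← map_mul]
  K_mul_F := by simp [← map_mul]
  E_mul_E := by simp [← map_mul]
  F_mul_F := by simp [← map_mul]
  F_mul_E := by simp [← map_mul]

theorem scale_scale (x : SectorTriple A) {c d : ℂ} (hc : c ≠ 0) (hd : d ≠ 0) :
    (x.scale hc).scale hd = x.scale (mul_ne_zero hc hd) := by
  ext <;> simp [smul_smul, mul_comm]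

theorem scale_tensor_scale (x : SectorTriple A) (y : SectorTriple B) {c : ℂ} (hc : c ≠ 0) :
    (x.scale hc).tensor (y.scale hc) = (x.tensor y).scale hc := by
  ext <;> simp [smul_tmul']

theorem map_assoc_tensor_tensor (x : SectorTriple A) (y : SectorTriple B) (w : SectorTriple C) :
    ((x.tensor y).tensor w).map (Algebra.TensorProduct.assoc ℂ ℂ ℂ A B C).toAlgHom =
      x.tensor (y.tensor w) := by
  ext <;> simp [Algebra.TensorProduct.one_def, tmul_add, add_tmul, add_assoc, ← smul_tmul',
    smul_smul, mul_comm, mul_left_comm]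

/-- `u` carries the action of `x` to that of `y`. The condition on `sign` follows from the one on
`K` only for cancellable `u`; it makes intertwiners compatible with tensor products. -/
structure Intertwines (u : A) (x y : SectorTriple A) : Prop where
  sign : x.sign = y.sign
  E : SemiconjBy u x.E y.E
  F : SemiconjBy u x.F y.F
  K : SemiconjBy u x.K y.K

namespace Intertwines

variable {u v : A} {x y z : SectorTriple A}

theorem one (x : SectorTriple A) : Intertwines 1 x x :=
  ⟨rfl, SemiconjBy.one_left _, SemiconjBy.one_left _, SemiconjBy.one_left _⟩

theorem mul (hu : Intertwines u y z) (hv : Intertwines v x y) : Intertwines (u * v) x z :=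
  ⟨hv.sign.trans hu.sign, hu.E.mul_left hv.E, hu.F.mul_left hv.F, hu.K.mul_left hv.K⟩

theorem add (hu : Intertwines u x y) (hv : Intertwines v x y) : Intertwines (u + v) x y :=
  ⟨hu.sign, hu.E.add_left hv.E, hu.F.add_left hv.F, hu.K.add_left hv.K⟩

theorem smul (c : ℂ) (hu : Intertwines u x y) : Intertwines (c • u) x y :=
  ⟨hu.sign, hu.E.smul_left c, hu.F.smul_left c, hu.K.smul_left c⟩

theorem scale (hu : Intertwines u x y) {c : ℂ} (hc : c ≠ 0) :
    Intertwines u (x.scale hc) (y.scale hc) :=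
  ⟨hu.sign, hu.E.smul_right c, hu.F.smul_right c⁻¹, hu.K⟩

theorem map (hu : Intertwines u x y) (f : A →ₐ[ℂ] B) : Intertwines (f u) (x.map f) (y.map f) :=
  ⟨hu.sign, hu.E.map f, hu.F.map f, hu.K.map f⟩

theorem tensor {u : A} {v : B} {x x' : SectorTriple A} {y y' : SectorTriple B}
    (hu : Intertwines u x x') (hv : Intertwines v y y') :
    Intertwines (u ⊗ₜ[ℂ] v) (x.tensor y) (x'.tensor y') where
  sign := by simp [hu.sign, hv.sign]
  E := by
    simp [SemiconjBy, mul_add, add_mul, hu.E.eq, hv.E.eq, hv.K.eq]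
  F := by
    simp [SemiconjBy, mul_add, add_mul, hu.F.eq, hv.F.eq, hu.K.eq, hu.sign]
  K := by
    simp [SemiconjBy, hu.K.eq, hv.K.eq]

end Intertwines

/-- An element implementing `E ↦ cE`, `F ↦ c⁻¹F` when `K² = -1`. There `-i • EFK` is the
idempotent projecting onto the image of `E`, and this is `c` on that image and `1` on the
complementary one. -/
def dilator (x : SectorTriple A) (c : ℂ) : A :=
  1 + (Complex.I * (1 - c)) • (x.E * (x.F * x.K))

/-- The Casimir element `FE - (i/4)(K - K⁻¹)`. -/
def casimir (x : SectorTriple A) : A :=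
  x.E * x.F + ((1 - x.sign) * (Complex.I / 4)) • x.K

theorem intertwines_dilator (x : SectorTriple A) (hx : x.sign = -1) {c : ℂ} (hc : c ≠ 0) :
    Intertwines (x.dilator c) x (x.scale hc) where
  sign := rfl
  E := by
    have hEFKE : x.E * (x.F * x.K) * x.E = Complex.I • x.E := by
      simp [mul_assoc, mul_add, add_mul, hx]
    have hEEFK : x.E * (x.E * (x.F * x.K)) = 0 := by simp
    rw [SemiconjBy, dilator, scale_E, add_mul, one_mul, smul_mul_assoc, hEFKE, smul_mul_assoc,
      mul_add, mul_one, mul_smul_comm, hEEFK]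
    match_scalars
    grind [Complex.I_mul_I]
  F := by
    have hEFKF : x.E * (x.F * x.K) * x.F = 0 := by simp [mul_assoc]
    have hFEFK : x.F * (x.E * (x.F * x.K)) = Complex.I • x.F := by
      simp [add_mul, hx]
    rw [SemiconjBy, dilator, scale_F, add_mul, one_mul, smul_mul_assoc, hEFKF, smul_mul_assoc,
      mul_add, mul_one, mul_smul_comm, hFEFK]
    match_scalars
    grind [Complex.I_mul_I]
  K := by
    simp [SemiconjBy, dilator, add_mul, mul_add, mul_assoc, hx]

theorem intertwines_casimir (x : SectorTriple A) : Intertwines x.casimir x x where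
  sign := rfl
  E := by
    simp only [SemiconjBy, casimir, add_mul, mul_add, mul_assoc, smul_mul_assoc, mul_smul_comm,
      F_mul_E, E_mul_E_mul, K_mul_E]
    module
  F := by
    simp only [SemiconjBy, casimir, add_mul, mul_add, mul_assoc, smul_mul_assoc, mul_smul_comm,
      F_mul_F, F_mul_E_mul, K_mul_F]
    module
  K := by
    simp [SemiconjBy, casimir, add_mul, mul_add, mul_assoc]

theorem intertwines_K (x : SectorTriple A) :
    Intertwines x.K x (x.scale (neg_ne_zero.2 one_ne_zero)) where
  sign := rfl
  E := by simp [SemiconjBy]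
  F := by simp [SemiconjBy, inv_neg]
  K := rfl

theorem dilator_scale (x : SectorTriple A) {d : ℂ} (hd : d ≠ 0) (c : ℂ) :
    (x.scale hd).dilator c = x.dilator c := by
  simp [dilator, smul_smul, hd]

theorem scale_one (x : SectorTriple A) : x.scale one_ne_zero = x := by
  ext <;> simp

theorem dilator_I_mul_casimir (x : SectorTriple A) (hx : x.sign = -1) :
    x.dilator Complex.I * x.casimir =
      (Complex.I / 2) • x.K + ((1 + Complex.I) / 2) • (x.E * x.F) := by
  simp only [dilator, casimir, hx, add_mul, mul_add, mul_assoc, one_mul, mul_one, mul_neg, mul_zero,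
    smul_mul_assoc, mul_smul_comm, smul_neg, F_mul_E_mul, F_mul_F_mul, K_mul_E_mul, K_mul_F_mul,
    K_mul_F, K_mul_K]
  match_scalars <;> grind [Complex.I_mul_I]

section Components

variable (x : SectorTriple A) (y : SectorTriple B) (w : SectorTriple C)

/-- The factorisation of the image of `Φ^{010}` in a triple of sectors, established in
`map_Phi010`. -/
def phi010 : A ⊗[ℂ] (B ⊗[ℂ] C) :=
  (1 + (-(1 + Complex.I)) • x.E ⊗ₜ[ℂ] (y.K ⊗ₜ[ℂ] w.F)) *
    (1 + (1 - Complex.I) • (x.F * x.K) ⊗ₜ[ℂ] (y.K ⊗ₜ[ℂ] (w.E * w.K)))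

/-- The factorisation of the image of `Φ^{101}` in a triple of sectors, established in
`map_Phi101`. -/
def phi101 : A ⊗[ℂ] (B ⊗[ℂ] C) :=
  Algebra.TensorProduct.assoc ℂ ℂ ℂ A B C ((x.tensor y).dilator Complex.I ⊗ₜ[ℂ] 1) *
    (x.dilator (-Complex.I) ⊗ₜ[ℂ] (y.K ⊗ₜ[ℂ] w.dilator (-Complex.I))) *
    (1 ⊗ₜ[ℂ] (y.tensor w).dilator Complex.I)

/-- The factorisation of the image of `Φ^{111}` in a triple of sectors, up to the scalar `-2β²`,
established in `map_Phi111`. -/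
def phi111 : A ⊗[ℂ] (B ⊗[ℂ] C) :=
  (x.dilator Complex.I ⊗ₜ[ℂ] ((y.dilator Complex.I * y.casimir) ⊗ₜ[ℂ] w.dilator Complex.I)) *
    (x.tensor (y.tensor w)).dilator (-Complex.I)

theorem intertwines_E_tmul_K_tmul_F (hx : x.sign = 1) (hw : w.sign = 1) :
    Intertwines (x.E ⊗ₜ[ℂ] (y.K ⊗ₜ[ℂ] w.F)) (x.tensor (y.tensor w)) (x.tensor (y.tensor w)) := by
  constructor <;>
    simp [SemiconjBy, mul_add, add_mul, tmul_add, tmul_neg, neg_tmul, hx, hw, ← smul_tmul',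
      add_comm, Algebra.TensorProduct.one_def, mul_smul_comm, smul_mul_assoc]

theorem intertwines_FK_tmul_K_tmul_EK (hx : x.sign = 1) (hw : w.sign = 1) :
    Intertwines ((x.F * x.K) ⊗ₜ[ℂ] (y.K ⊗ₜ[ℂ] (w.E * w.K))) (x.tensor (y.tensor w))
      (x.tensor (y.tensor w)) := by
  constructor <;>
    simp [SemiconjBy, mul_add, add_mul, tmul_add, tmul_neg, neg_tmul, hx, hw, ← smul_tmul',
      add_comm, Algebra.TensorProduct.one_def, mul_assoc, mul_smul_comm, smul_mul_assoc]

theorem intertwines_phi010 (hx : x.sign = 1) (hw : w.sign = 1) :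
    Intertwines (phi010 x y w) (x.tensor (y.tensor w)) (x.tensor (y.tensor w)) :=
  ((Intertwines.one _).add ((intertwines_E_tmul_K_tmul_F x y w hx hw).smul _)).mul
    ((Intertwines.one _).add ((intertwines_FK_tmul_K_tmul_EK x y w hx hw).smul _))

theorem intertwines_phi101 (hx : x.sign = -1) (hy : y.sign = 1) (hw : w.sign = -1) :
    Intertwines (phi101 x y w) (x.tensor (y.tensor w)) (x.tensor (y.tensor w)) := by
  have hI : Complex.I ≠ 0 := Complex.I_ne_zero
  have hnI : -Complex.I ≠ 0 := neg_ne_zero.2 hI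
  have hright : Intertwines (1 ⊗ₜ[ℂ] (y.tensor w).dilator Complex.I)
      (x.tensor (y.tensor w)) (x.tensor ((y.scale hI).tensor (w.scale hI))) := by
    rw [scale_tensor_scale]
    exact (Intertwines.one x).tensor (intertwines_dilator _ (by simp [hy, hw]) hI)
  have hmiddle : Intertwines (x.dilator (-Complex.I) ⊗ₜ[ℂ] (y.K ⊗ₜ[ℂ] w.dilator (-Complex.I)))
      (x.tensor ((y.scale hI).tensor (w.scale hI)))
      ((x.scale hnI).tensor ((y.scale hnI).tensor w)) := by
    refine (intertwines_dilator x hx hnI).tensor (Intertwines.tensor ?_ ?_)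
    · simpa [scale_scale] using intertwines_K (y.scale hI)
    · simpa [scale_scale, dilator_scale, scale_one] using intertwines_dilator (w.scale hI) hw hnI
  have hleft : Intertwines
      (Algebra.TensorProduct.assoc ℂ ℂ ℂ A B C ((x.tensor y).dilator Complex.I ⊗ₜ[ℂ] 1))
      ((x.scale hnI).tensor ((y.scale hnI).tensor w)) (x.tensor (y.tensor w)) := by
    rw [← map_assoc_tensor_tensor, ← map_assoc_tensor_tensor x, scale_tensor_scale]
    have hdil : Intertwines ((x.tensor y).dilator Complex.I) ((x.tensor y).scale hnI)
        (x.tensor y) := by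
      simpa [scale_scale, dilator_scale, scale_one] using
        intertwines_dilator ((x.tensor y).scale hnI) (by simp [hx, hy]) hI
    exact (hdil.tensor (Intertwines.one w)).map (Algebra.TensorProduct.assoc ℂ ℂ ℂ A B C).toAlgHom
  exact (hleft.mul hmiddle).mul hright

theorem intertwines_phi111 (hx : x.sign = -1) (hy : y.sign = -1) (hw : w.sign = -1) :
    Intertwines (phi111 x y w) (x.tensor (y.tensor w)) (x.tensor (y.tensor w)) := by
  have hI : Complex.I ≠ 0 := Complex.I_ne_zero
  have hnI : -Complex.I ≠ 0 := neg_ne_zero.2 hI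
  have hT : (x.tensor (y.tensor w)).sign = -1 := by simp [hx, hy, hw]
  have hfactors : Intertwines
      (x.dilator Complex.I ⊗ₜ[ℂ] ((y.dilator Complex.I * y.casimir) ⊗ₜ[ℂ] w.dilator Complex.I))
      (x.tensor (y.tensor w)) ((x.tensor (y.tensor w)).scale hI) := by
    rw [← scale_tensor_scale, ← scale_tensor_scale]
    exact (intertwines_dilator x hx hI).tensor
      (((intertwines_dilator y hy hI).mul (intertwines_casimir y)).tensor
        (intertwines_dilator w hw hI))
  simpa [phi111, scale_scale, scale_one] using
    (hfactors.scale hnI).mul (intertwines_dilator _ hT hnI)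

end Components

end SectorTriple

section Relations

theorem mul_eq_neg_mul_of_conj_eq_neg {R : Type*} [Ring R] {k k' a : R} (hk : k' * k = 1)
    (h : k * a * k' = -a) : k * a = -(a * k) := by
  rw [← neg_mul, ← h, mul_assoc _ k', hk, mul_one]

theorem commute_sq_of_mul_eq_neg {R : Type*} [Ring R] {a b : R} (h : a * b = -(b * a)) :
    Commute (a ^ 2) b := by
  rw [commute_iff_eq, pow_two, mul_assoc, h, mul_neg, ← mul_assoc, h, neg_mul, neg_neg, mul_assoc]

theorem gKi_mul_gK : gKi * gK = 1 := by
  simpa using! RingQuot.mkAlgHom_rel ℂ QRel.KiK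

theorem gK_pow_four : gK ^ 4 = 1 := by
  simpa using! RingQuot.mkAlgHom_rel ℂ QRel.K4

theorem gE_mul_gE : gE * gE = 0 := by
  simpa [pow_two] using! RingQuot.mkAlgHom_rel ℂ QRel.Esq

theorem gF_mul_gF : gF * gF = 0 := by
  simpa [pow_two] using! RingQuot.mkAlgHom_rel ℂ QRel.Fsq

theorem gK_mul_gE : gK * gE = -(gE * gK) :=
  mul_eq_neg_mul_of_conj_eq_neg gKi_mul_gK (by simpa using! RingQuot.mkAlgHom_rel ℂ QRel.KEKi)

theorem gK_mul_gF : gK * gF = -(gF * gK) :=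
  mul_eq_neg_mul_of_conj_eq_neg gKi_mul_gK (by simpa using! RingQuot.mkAlgHom_rel ℂ QRel.KFKi)

theorem gF_mul_gE : gF * gE = gE * gF - (2 * Complex.I)⁻¹ • (gK - gKi) := by
  have hcomm : gE * gF - gF * gE = (2 * Complex.I)⁻¹ • (gK - gKi) := by
    simpa only [map_sub, map_mul, map_smul] using! RingQuot.mkAlgHom_rel ℂ QRel.EF
  rw [← hcomm, sub_sub_cancel]

theorem gKi_eq : gKi = gK ^ 2 * gK := by
  calc gKi = gKi * gK ^ 4 := by rw [gK_pow_four, mul_one]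
    _ = gKi * gK * (gK ^ 2 * gK) := by noncomm_ring
    _ = gK ^ 2 * gK := by rw [gKi_mul_gK, one_mul]

theorem adjoin_generators : Algebra.adjoin ℂ {gE, gF, gK} = ⊤ := by
  set S := Algebra.adjoin ℂ {gE, gF, gK}
  have hE : gE ∈ S := Algebra.subset_adjoin (by simp)
  have hF : gF ∈ S := Algebra.subset_adjoin (by simp)
  have hK : gK ∈ S := Algebra.subset_adjoin (by simp)
  have hKi : gKi ∈ S := gKi_eq ▸ S.mul_mem (S.pow_mem hK 2) hK
  rw [eq_top_iff, ← (AlgHom.range_eq_top _).2 (RingQuot.mkAlgHom_surjective ℂ QRel),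
    ← Algebra.map_top, ← FreeAlgebra.adjoin_range_ι, AlgHom.map_adjoin, Algebra.adjoin_le_iff]
  rintro _ ⟨_, ⟨_ | _ | _ | _, rfl⟩, rfl⟩
  exacts [hE, hF, hK, hKi]

theorem commute_algHom_of_generators {A : Type*} [Ring A] [Algebra ℂ A] (f : Q →ₐ[ℂ] A) {u : A}
    (hE : Commute u (f gE)) (hF : Commute u (f gF)) (hK : Commute u (f gK)) (a : Q) :
    Commute u (f a) := by
  have hle : Algebra.adjoin ℂ {gE, gF, gK} ≤ (Subalgebra.centralizer ℂ {u}).comap f := by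
    rw [Algebra.adjoin_le_iff]
    rintro _ (rfl | rfl | rfl) <;>
      exact (Subalgebra.mem_centralizer_iff ℂ).2 (by rintro _ rfl; assumption)
  rw [adjoin_generators] at hle
  exact (Subalgebra.mem_centralizer_iff ℂ).1 (hle Algebra.mem_top) u rfl

theorem commute_gK_sq (a : Q) : Commute (gK ^ 2) a :=
  commute_algHom_of_generators (AlgHom.id ℂ Q) (commute_sq_of_mul_eq_neg gK_mul_gE)
    (commute_sq_of_mul_eq_neg gK_mul_gF) ((Commute.refl gK).pow_left 2) a

end Relations

namespace SectorTriple

variable {A B C : Type*} [Ring A] [Algebra ℂ A] [Ring B] [Algebra ℂ B] [Ring C] [Algebra ℂ C]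

/-- The algebra homomorphism `f` sends the generators of `Q` to those of the triple `x`. -/
structure Realizes (x : SectorTriple A) (f : Q →ₐ[ℂ] A) : Prop where
  map_gE : f gE = x.E
  map_gF : f gF = x.F
  map_gK : f gK = x.K

theorem exists_realizes (f : Q →ₐ[ℂ] A) {s : ℂ} (hs : f (gK ^ 2) = s • 1) :
    ∃ x : SectorTriple A, x.sign = s ∧ x.Realizes f := by
  refine ⟨⟨s, f gE, f gF, f gK, ?_, ?_, ?_, ?_, ?_, ?_⟩, rfl, rfl, rfl, rfl⟩
  · rw [← map_mul, ← pow_two, hs]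
  · rw [← map_mul, gK_mul_gE, map_neg, map_mul]
  · rw [← map_mul, gK_mul_gF, map_neg, map_mul]
  · rw [← map_mul, gE_mul_gE, map_zero]
  · rw [← map_mul, gF_mul_gF, map_zero]
  · have hI : (2 * Complex.I)⁻¹ = -(Complex.I / 2) := by
      rw [mul_inv, Complex.inv_I]; ring
    rw [← map_mul, gF_mul_gE, gKi_eq, hI, map_sub, map_smul, map_sub, map_mul f (gK ^ 2), hs,
      smul_one_mul, map_mul]
    module

namespace Realizes

variable {x : SectorTriple A} {y : SectorTriple B} {f : Q →ₐ[ℂ] A} {g : Q →ₐ[ℂ] B}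

theorem map_gKi (hx : x.Realizes f) : f gKi = x.sign • x.K := by
  rw [gKi_eq, map_mul, map_pow, hx.map_gK, pow_two, K_mul_K, smul_one_mul]

theorem tensor {Δ : Q →ₐ[ℂ] Q ⊗[ℂ] Q} (hΔE : Δ gE = 1 ⊗ₜ gE + gE ⊗ₜ gK)
    (hΔF : Δ gF = gKi ⊗ₜ gF + gF ⊗ₜ 1) (hΔK : Δ gK = gK ⊗ₜ gK)
    (hx : x.Realizes f) (hy : y.Realizes g) :
    (x.tensor y).Realizes ((Algebra.TensorProduct.map f g).comp Δ) := by
  constructor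
  · simp [hΔE, hx.map_gE, hy.map_gE, hy.map_gK]
  · simp [hΔF, hx.map_gF, hy.map_gF, hx.map_gKi]
  · simp [hΔK, hx.map_gK, hy.map_gK]

theorem commute {u : A} (hx : x.Realizes f) (hu : Intertwines u x x) (a : Q) : Commute u (f a) :=
  commute_algHom_of_generators f (hx.map_gE ▸ hu.E) (hx.map_gF ▸ hu.F) (hx.map_gK ▸ hu.K) a

end Realizes

section Phi

variable {x : SectorTriple A} {y : SectorTriple B} {w : SectorTriple C}
  {f : Q →ₐ[ℂ] A} {g : Q →ₐ[ℂ] B} {h : Q →ₐ[ℂ] C}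

theorem map_Phi010 (hf : x.Realizes f) (hg : y.Realizes g) (hh : w.Realizes h)
    (hy : y.sign = -1) (hw : w.sign = 1) :
    Algebra.TensorProduct.map f (Algebra.TensorProduct.map g h) Phi010 = phi010 x y w := by
  simp only [Phi010, t3, eFK, eEK, eEFK, map_add, map_sub, map_smul, map_mul, map_one,
    Algebra.TensorProduct.map_tmul, hf.map_gE, hf.map_gF, hf.map_gK, hg.map_gK, hh.map_gE,
    hh.map_gF, hh.map_gK]
  simp only [phi010, hy, hw, Algebra.TensorProduct.one_def, Algebra.TensorProduct.tmul_mul_tmul,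
    mul_add, add_mul, tmul_add, tmul_smul, ← smul_tmul', mul_smul_comm, smul_mul_assoc, smul_smul,
    mul_assoc, one_mul, mul_one, mul_neg, K_mul_K, F_mul_E_mul]
  match_scalars <;> grind [Complex.I_mul_I]

theorem map_Phi101 (hf : x.Realizes f) (hg : y.Realizes g) (hh : w.Realizes h)
    (hx : x.sign = -1) (hy : y.sign = 1) (hw : w.sign = -1) :
    Algebra.TensorProduct.map f (Algebra.TensorProduct.map g h) Phi101 = phi101 x y w := by
  simp only [Phi101, t3, eEF, eFK, eEK, eEFK, map_add, map_sub, map_smul, map_mul, map_one,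
    Algebra.TensorProduct.map_tmul, hf.map_gE, hf.map_gF, hf.map_gK, hg.map_gE, hg.map_gF,
    hg.map_gK, hh.map_gE, hh.map_gF, hh.map_gK]
  simp only [phi101, dilator, tensor_E, tensor_F, tensor_K, map_add, map_smul, hx, hy, hw,
    Algebra.TensorProduct.assoc_tmul, Algebra.TensorProduct.one_def,
    Algebra.TensorProduct.tmul_mul_tmul, mul_add, add_mul, tmul_add, add_tmul, tmul_smul,
    ← smul_tmul', tmul_neg_eq_smul, neg_tmul_eq_smul, mul_smul_comm, smul_mul_assoc, smul_smul,
    mul_assoc, one_mul, mul_one, mul_neg, mul_zero, zero_tmul, tmul_zero, smul_zero, add_zero,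
    zero_add, K_mul_K, K_mul_E, K_mul_F, E_mul_E, F_mul_F, F_mul_E, K_mul_E_mul, K_mul_F_mul,
    E_mul_E_mul, F_mul_F_mul, F_mul_E_mul]
  match_scalars <;> grind [Complex.I_mul_I]

theorem map_Phi111 (β : ℂ) (hf : x.Realizes f) (hg : y.Realizes g) (hh : w.Realizes h)
    (hx : x.sign = -1) (hy : y.sign = -1) (hw : w.sign = -1) :
    Algebra.TensorProduct.map f (Algebra.TensorProduct.map g h) (Phi111 β) =
      (-2 * β ^ 2) • phi111 x y w := by
  simp only [Phi111, t3, eEF, eFK, eEK, eEFK, map_add, map_sub, map_smul, map_mul, map_one,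
    Algebra.TensorProduct.map_tmul, hf.map_gE, hf.map_gF, hf.map_gK, hg.map_gE, hg.map_gF,
    hg.map_gK, hh.map_gE, hh.map_gF, hh.map_gK]
  rw [phi111, dilator_I_mul_casimir y hy]
  simp only [dilator, tensor_E, tensor_F, tensor_K, hx, hy, hw, Algebra.TensorProduct.one_def,
    Algebra.TensorProduct.tmul_mul_tmul, mul_add, add_mul, tmul_add, add_tmul, tmul_smul,
    ← smul_tmul', tmul_neg_eq_smul, neg_tmul_eq_smul, mul_smul_comm, smul_mul_assoc, smul_smul,
    mul_assoc, one_mul, mul_one, mul_neg, mul_zero, zero_tmul, tmul_zero, smul_zero, add_zero,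
    zero_add, K_mul_K, K_mul_E, K_mul_F, F_mul_F, F_mul_E, K_mul_E_mul, K_mul_F_mul, E_mul_E_mul,
    F_mul_F_mul, F_mul_E_mul]
  match_scalars <;> grind [Complex.I_mul_I]

end Phi

end SectorTriple

section PrincipalIdeals

variable {A B C : Type*} [Ring A] [Algebra ℂ A] [Ring B] [Algebra ℂ B] [Ring C] [Algebra ℂ C]

/-- The algebra of `ℂ`-linear endomorphisms of the left ideal generated by `e`. -/
def PrincipalEnd (e : A) : Type _ :=
  Module.End ℂ (Ideal.span {e})

instance (e : A) : Ring (PrincipalEnd e) :=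
  inferInstanceAs (Ring (Module.End ℂ (Ideal.span {e})))

instance (e : A) : Algebra ℂ (PrincipalEnd e) :=
  inferInstanceAs (Algebra ℂ (Module.End ℂ (Ideal.span {e})))

/-- The action of an algebra on the left ideal generated by `e`. For a central idempotent `e` this
is the projection to the corresponding block. -/
def principalRep (e : A) : A →ₐ[ℂ] PrincipalEnd e :=
  Algebra.lsmul ℂ ℂ (Ideal.span {e})

/-- Evaluation of an endomorphism of the left ideal generated by `e` at `e`. -/
def evalGenerator (e : A) : PrincipalEnd e →ₗ[ℂ] A :=
  (Ideal.span {e}).subtype.restrictScalars ℂ ∘ₗ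
    LinearMap.applyₗ ⟨e, Ideal.mem_span_singleton_self e⟩

theorem evalGenerator_principalRep (e a : A) : evalGenerator e (principalRep e a) = a * e :=
  rfl

theorem principalRep_eq_smul_one {e z : A} (hz : ∀ a, Commute z a) {s : ℂ} (hze : z * e = s • e) :
    principalRep e z = s • 1 := by
  refine LinearMap.ext fun ⟨m, hm⟩ ↦ Subtype.ext ?_
  obtain ⟨a, rfl⟩ := Ideal.mem_span_singleton'.1 hm
  change z * (a * e) = s • (a * e)
  rw [← mul_assoc, (hz a).eq, mul_assoc, hze, mul_smul_comm]

theorem map_evalGenerator_map_principalRep (e : A) (e' : B) (e'' : C) (X : A ⊗[ℂ] (B ⊗[ℂ] C)) :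
    TensorProduct.map (evalGenerator e) (TensorProduct.map (evalGenerator e') (evalGenerator e''))
        (Algebra.TensorProduct.map (principalRep e)
          (Algebra.TensorProduct.map (principalRep e') (principalRep e'')) X) =
      X * e ⊗ₜ (e' ⊗ₜ e'') := by
  induction X with
  | zero => simp
  | add X Y hX hY => simp only [map_add, add_mul, hX, hY]
  | tmul a Y => induction Y with
    | zero => simp
    | add X Y hX hY => simp only [tmul_add, map_add, add_mul, hX, hY]
    | tmul b c => simp [evalGenerator_principalRep]

theorem commute_mul_tmul_of_principalRep {e : A} {e' : B} {e'' : C} {X P : A ⊗[ℂ] (B ⊗[ℂ] C)}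
    (hP : Commute
      (Algebra.TensorProduct.map (principalRep e)
        (Algebra.TensorProduct.map (principalRep e') (principalRep e'')) P)
      (Algebra.TensorProduct.map (principalRep e)
        (Algebra.TensorProduct.map (principalRep e') (principalRep e'')) X))
    (hX : Commute X (e ⊗ₜ (e' ⊗ₜ e''))) : Commute X (P * e ⊗ₜ (e' ⊗ₜ e'')) := by
  have hXP : P * X * e ⊗ₜ (e' ⊗ₜ e'') = X * P * e ⊗ₜ (e' ⊗ₜ e'') := by
    rw [← map_evalGenerator_map_principalRep, map_mul, hP.eq, ← map_mul,
      map_evalGenerator_map_principalRep]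
  rw [commute_iff_eq, ← mul_assoc, ← hXP, mul_assoc, mul_assoc, hX.eq]

theorem commute_tmul_of_forall_commute {a : A} {b : B} (ha : ∀ a', Commute a' a)
    (hb : ∀ b', Commute b' b) (X : A ⊗[ℂ] B) : Commute X (a ⊗ₜ b) := by
  induction X with
  | zero => exact Commute.zero_left _
  | add X Y hX hY => exact hX.add_left hY
  | tmul a' b' =>
    simp only [commute_iff_eq, Algebra.TensorProduct.tmul_mul_tmul, (ha a').eq, (hb b').eq]

end PrincipalIdeals

section Involutions

variable {A : Type*} [Ring A] [Algebra ℂ A] {z : A}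

theorem mul_smul_one_add_of_mul_self_eq_one (hz : z * z = 1) (c : ℂ) :
    z * (c • (1 + z)) = (1 : ℂ) • c • (1 + z) := by
  rw [mul_smul_comm, mul_add, mul_one, hz, add_comm, one_smul]

theorem mul_smul_one_sub_of_mul_self_eq_one (hz : z * z = 1) (c : ℂ) :
    z * (c • (1 - z)) = (-1 : ℂ) • c • (1 - z) := by
  rw [mul_smul_comm, mul_sub, mul_one, hz, ← neg_sub, smul_neg, neg_one_smul]

end Involutions

section CentralIdempotents

theorem gK_sq_mul_gK_sq : gK ^ 2 * gK ^ 2 = 1 := by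
  rw [← pow_add, gK_pow_four]

theorem commute_e0 (a : Q) : Commute a e0 :=
  ((Commute.one_right a).add_right (commute_gK_sq a).symm).smul_right _

theorem commute_e1 (a : Q) : Commute a e1 :=
  ((Commute.one_right a).sub_right (commute_gK_sq a).symm).smul_right _

theorem exists_realizes_principalRep_e0 :
    ∃ x : SectorTriple (PrincipalEnd e0),
      x.sign = 1 ∧ x.Realizes (principalRep e0) :=
  SectorTriple.exists_realizes _ (principalRep_eq_smul_one commute_gK_sq
    (mul_smul_one_add_of_mul_self_eq_one gK_sq_mul_gK_sq _))

theorem exists_realizes_principalRep_e1 :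
    ∃ x : SectorTriple (PrincipalEnd e1),
      x.sign = -1 ∧ x.Realizes (principalRep e1) :=
  SectorTriple.exists_realizes _ (principalRep_eq_smul_one commute_gK_sq
    (mul_smul_one_sub_of_mul_self_eq_one gK_sq_mul_gK_sq _))

end CentralIdempotents

section Coproduct

theorem map_map_copR {A : Type} {B B' B'' : Type*} [Ring A] [Algebra ℂ A] [Ring B] [Algebra ℂ B]
    [Ring B'] [Algebra ℂ B'] [Ring B''] [Algebra ℂ B''] (D : A →ₐ[ℂ] TP2 ℂ A) (f : A →ₐ[ℂ] B)
    (g : A →ₐ[ℂ] B') (h : A →ₐ[ℂ] B'') (X : TP2 ℂ A) :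
    Algebra.TensorProduct.map f (Algebra.TensorProduct.map g h) (copR D X) =
      Algebra.TensorProduct.map f ((Algebra.TensorProduct.map g h).comp D) X := by
  induction X using TensorProduct.induction_on with
  | zero => simp only [map_zero]
  | add X Y hX hY => simp only [map_add, hX, hY]
  | tmul a b => rfl

variable {Δ : Q →ₐ[ℂ] Q ⊗[ℂ] Q} (hΔE : Δ gE = 1 ⊗ₜ gE + gE ⊗ₜ gK)
  (hΔF : Δ gF = gKi ⊗ₜ gF + gF ⊗ₜ 1) (hΔK : Δ gK = gK ⊗ₜ gK)

include hΔE hΔF hΔK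

theorem copL_coproduct (a : Q) : copL Δ (Δ a) = copR Δ (Δ a) := by
  have hΔKi : Δ gKi = gKi ⊗ₜ gKi := by
    rw [gKi_eq, map_mul, map_pow, hΔK, Algebra.TensorProduct.tmul_pow,
      Algebra.TensorProduct.tmul_mul_tmul]
  have hcoassoc : ((Algebra.TensorProduct.assoc ℂ ℂ ℂ Q Q Q).toAlgHom.comp
      (Algebra.TensorProduct.map Δ (AlgHom.id ℂ Q))).comp Δ =
        (Algebra.TensorProduct.map (AlgHom.id ℂ Q) Δ).comp Δ := by
    refine AlgHom.ext_of_adjoin_eq_top adjoin_generators ?_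
    rintro _ (rfl | rfl | rfl) <;>
      simp [hΔE, hΔF, hΔK, hΔKi, tmul_add, add_tmul, Algebra.TensorProduct.one_def, add_assoc]
  exact DFunLike.congr_fun hcoassoc a

theorem commute_copR_mul_t3 {e e' e'' : Q} (he : ∀ a, Commute a e) (he' : ∀ a, Commute a e')
    (he'' : ∀ a, Commute a e'') {x : SectorTriple (PrincipalEnd e)}
    {y : SectorTriple (PrincipalEnd e')} {w : SectorTriple (PrincipalEnd e'')}
    (hx : x.Realizes (principalRep e)) (hy : y.Realizes (principalRep e'))
    (hw : w.Realizes (principalRep e'')) {P : TP3 ℂ Q}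
    (hP : SectorTriple.Intertwines
      (Algebra.TensorProduct.map (principalRep e)
        (Algebra.TensorProduct.map (principalRep e') (principalRep e'')) P)
      (x.tensor (y.tensor w)) (x.tensor (y.tensor w))) (a : Q) :
    Commute (copR Δ (Δ a)) (P * t3 e e' e'') := by
  refine commute_mul_tmul_of_principalRep ?_
    (commute_tmul_of_forall_commute he (commute_tmul_of_forall_commute he' he'') _)
  rw [map_map_copR]
  exact (hx.tensor hΔE hΔF hΔK (hy.tensor hΔE hΔF hΔK hw)).commute hP a

end Coproduct

theorem statement7_general (β : ℂ)
    (Δ : Q →ₐ[ℂ] TP2 ℂ Q)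
    (hΔE : Δ gE = (1 : Q) ⊗ₜ[ℂ] gE + gE ⊗ₜ[ℂ] gK)
    (hΔF : Δ gF = gKi ⊗ₜ[ℂ] gF + gF ⊗ₜ[ℂ] (1 : Q))
    (hΔK : Δ gK = gK ⊗ₜ[ℂ] gK) (a : Q) :
    copL Δ (Δ a) * Phi β = Phi β * copR Δ (Δ a) := by
  obtain ⟨x₀, h₀, hx₀⟩ := exists_realizes_principalRep_e0
  obtain ⟨x₁, h₁, hx₁⟩ := exists_realizes_principalRep_e1
  have h010 := commute_copR_mul_t3 hΔE hΔF hΔK commute_e0 commute_e1 commute_e0 hx₀ hx₁ hx₀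
    (SectorTriple.map_Phi010 hx₀ hx₁ hx₀ h₁ h₀ ▸ SectorTriple.intertwines_phi010 _ _ _ h₀ h₀) a
  have h101 := commute_copR_mul_t3 hΔE hΔF hΔK commute_e1 commute_e0 commute_e1 hx₁ hx₀ hx₁
    (SectorTriple.map_Phi101 hx₁ hx₀ hx₁ h₁ h₀ h₁ ▸
      SectorTriple.intertwines_phi101 _ _ _ h₁ h₀ h₁) a
  have h111 := commute_copR_mul_t3 hΔE hΔF hΔK commute_e1 commute_e1 commute_e1 hx₁ hx₁ hx₁
    (SectorTriple.map_Phi111 β hx₁ hx₁ hx₁ h₁ h₁ h₁ ▸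
      (SectorTriple.intertwines_phi111 _ _ _ h₁ h₁ h₁).smul _) a
  have htriv {e e' e'' : Q} (he : ∀ a, Commute a e) (he' : ∀ a, Commute a e')
      (he'' : ∀ a, Commute a e'') : Commute (copR Δ (Δ a)) (t3 e e' e'') :=
    commute_tmul_of_forall_commute he (commute_tmul_of_forall_commute he' he'') _
  rw [copL_coproduct hΔE hΔF hΔK]
  exact (((((((htriv commute_e0 commute_e0 commute_e0).add_right
    (htriv commute_e1 commute_e0 commute_e0)).add_right h010).add_right
    (htriv commute_e0 commute_e0 commute_e1)).add_right
    (htriv commute_e1 commute_e1 commute_e0)).add_right h101).add_right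
    (htriv commute_e0 commute_e1 commute_e1)).add_right h111

/-- the coassociator `Φ` intertwines the two iterated coproducts:
`(Δ⊗id)(Δ(a)) · Φ = Φ · (id⊗Δ)(Δ(a))` for all `a ∈ Q`. -/
theorem statement7 (β : ℂ) (hβ : β ^ 4 = -1)
    (Δ : Q →ₐ[ℂ] TP2 ℂ Q)
    (hΔE : Δ gE = (1:Q) ⊗ₜ[ℂ] gE + gE ⊗ₜ[ℂ] gK)
    (hΔF : Δ gF = gKi ⊗ₜ[ℂ] gF + gF ⊗ₜ[ℂ] (1:Q))
    (hΔK : Δ gK = gK ⊗ₜ[ℂ] gK) :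
    ∀ a : Q, copL Δ (Δ a) * Phi β = Phi β * copR Δ (Δ a) :=
  statement7_general β Δ hΔE hΔF hΔK
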